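/- arXiv:1302.0119 — 2 statements merged into one kernel-verified Lean document; each statement's English description precedes it below -/
import Mathlib

section
/- There exists a constant C̄ > 0 such that |(−Δ)^{σ/2} φ_1(x)| ≤ C̄ / (1 + |x|^{N+σ}) for all x ∈ ℝ^N. -/
open MeasureTheory Real Filter

/-- The normalization constant `C_{N,σ}` of the fractional Laplacian. -/
noncomputable def fracC (N : ℕ) (σ : ℝ) : ℝ :=
  2 ^ (σ - 1) * σ * Real.Gamma (((N : ℝ) + σ) / 2) /
    (Real.pi ^ ((N : ℝ) / 2) * Real.Gamma (1 - σ / 2))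

/-- The fractional Laplacian of order `σ/2`, as the absolutely convergent
symmetrized singular integral. -/
noncomputable def fracLap (N : ℕ) (σ : ℝ)
    (g : EuclideanSpace ℝ (Fin N) → ℝ) (x : EuclideanSpace ℝ (Fin N)) : ℝ :=
  (fracC N σ / 2) *
    ∫ z : EuclideanSpace ℝ (Fin N),
      (2 * g x - g (x + z) - g (x - z)) / ‖z‖ ^ ((N : ℝ) + σ)

/-!
The second difference of a compactly supported `C²` function is at most a multiple of
`min 1 |z|²`, which `|z|^{-N-σ}` integrates when `0 < σ < 2`; this bounds `(−Δ)^{σ/2} g`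
uniformly. If the support of `g` lies in the ball of radius `|x| / 2`, then `g x = 0` and
`g (x ± z) ≠ 0` forces `|z| ≥ |x| / 2`, so the kernel is at most `(2 / |x|)^{N+σ}` wherever the
integrand does not vanish, and what remains to integrate is `|g|`.
-/

/-- The symmetric second difference of `g` at `x` with increment `z`, with the sign for which the
fractional Laplacian is a positive operator. -/
def secondDiff {E F : Type*} [AddGroup E] [AddCommGroup F] [Module ℝ F] (g : E → F) (x z : E) : F :=
  (2 : ℝ) • g x - g (x + z) - g (x - z)

lemma norm_secondDiff_le_four_mul {E F : Type*} [AddGroup E] [SeminormedAddCommGroup F]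
    [NormedSpace ℝ F] {g : E → F} {B : ℝ} (hB : ∀ y, ‖g y‖ ≤ B) (x z : E) :
    ‖secondDiff g x z‖ ≤ 4 * B := by
  calc ‖secondDiff g x z‖ ≤ ‖(2 : ℝ) • g x‖ + ‖g (x + z)‖ + ‖g (x - z)‖ :=
        (norm_sub_le _ _).trans (add_le_add_left (norm_sub_le _ _) _)
    _ = 2 * ‖g x‖ + ‖g (x + z)‖ + ‖g (x - z)‖ := by rw [norm_smul, Real.norm_two]
    _ ≤ 4 * B := by linarith [hB x, hB (x + z), hB (x - z)]

section SecondDiff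

variable {E F : Type*} [NormedAddCommGroup E] [NormedSpace ℝ E] [NormedAddCommGroup F]
  [NormedSpace ℝ F]

lemma norm_secondDiff_le_mul_sq {g : E → F} {K : NNReal} (hg : Differentiable ℝ g)
    (hK : LipschitzWith K (fderiv ℝ g)) (x z : E) :
    ‖secondDiff g x z‖ ≤ K * ‖z‖ ^ 2 := by
  -- The second difference is a first difference of the map `y ↦ g y - g (y - z)`.
  have hderiv (y : E) : HasFDerivAt (fun y ↦ g y - g (y - z))
      (fderiv ℝ g y - fderiv ℝ g (y - z)) y :=
    (hg y).hasFDerivAt.sub ((hasFDerivAt_comp_sub z).2 (hg (y - z)).hasFDerivAt)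
  have hbound (y : E) : ‖fderiv ℝ g y - fderiv ℝ g (y - z)‖ ≤ K * ‖z‖ := by
    simpa only [sub_sub_cancel] using hK.norm_sub_le y (y - z)
  calc ‖secondDiff g x z‖
      = ‖(g (x + z) - g (x + z - z)) - (g x - g (x - z))‖ := by
        rw [secondDiff, two_smul, add_sub_cancel_right, ← norm_neg]
        congr 1
        abel
    _ ≤ K * ‖z‖ * ‖x + z - x‖ :=
        convex_univ.norm_image_sub_le_of_norm_hasFDerivWithin_le
          (fun y _ ↦ (hderiv y).hasFDerivWithinAt) (fun y _ ↦ hbound y)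
          (Set.mem_univ x) (Set.mem_univ (x + z))
    _ = K * ‖z‖ ^ 2 := by rw [add_sub_cancel_left]; ring

lemma norm_secondDiff_le_max_mul_min {g : E → F} {K : NNReal} {B : ℝ} (hg : Differentiable ℝ g)
    (hK : LipschitzWith K (fderiv ℝ g)) (hB : ∀ y, ‖g y‖ ≤ B) (x z : E) :
    ‖secondDiff g x z‖ ≤ max (K : ℝ) (4 * B) * min 1 (‖z‖ ^ 2) := by
  rw [mul_min_of_nonneg _ _ (le_max_of_le_left K.coe_nonneg), mul_one]
  refine le_min ?_ ?_
  · exact (norm_secondDiff_le_four_mul hB x z).trans (le_max_right _ _)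
  · calc ‖secondDiff g x z‖ ≤ K * ‖z‖ ^ 2 := norm_secondDiff_le_mul_sq hg hK x z
      _ ≤ max (K : ℝ) (4 * B) * ‖z‖ ^ 2 := by gcongr; exact le_max_left _ _

end SecondDiff

section LevyKernel

lemma integrableOn_Ioi_rpow_mul_min_one_sq {σ : ℝ} (hσ0 : 0 < σ) (hσ2 : σ < 2) :
    IntegrableOn (fun r : ℝ ↦ r ^ (-1 - σ) * min 1 (r ^ 2)) (Set.Ioi 0) := by
  rw [← Set.Ioo_union_Ici_eq_Ioi one_pos]
  refine IntegrableOn.union ?_ ?_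
  · have hnear : IntegrableOn (fun r : ℝ ↦ r ^ (1 - σ)) (Set.Ioo 0 1) :=
      (intervalIntegral.integrableOn_Ioo_rpow_iff one_pos).2 (by linarith)
    refine hnear.congr_fun (fun r hr ↦ ?_) measurableSet_Ioo
    dsimp only
    rw [min_eq_right (pow_le_one₀ hr.1.le hr.2.le), ← Real.rpow_natCast, ← Real.rpow_add hr.1]
    congr 1
    push_cast
    ring
  · have hfar : IntegrableOn (fun r : ℝ ↦ r ^ (-1 - σ)) (Set.Ici 1) :=
      (integrableOn_Ici_iff_integrableOn_Ioi).2
        (integrableOn_Ioi_rpow_of_lt (by linarith) one_pos)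
    refine hfar.congr_fun (fun r hr ↦ ?_) measurableSet_Ici
    dsimp only
    rw [min_eq_left (one_le_pow₀ hr), mul_one]

variable {E : Type*} [NormedAddCommGroup E] [NormedSpace ℝ E] [FiniteDimensional ℝ E]
  [MeasurableSpace E] [BorelSpace E]

lemma integrable_inv_norm_rpow_mul_min_one_sq [Nontrivial E] (μ : Measure E)
    [μ.IsAddHaarMeasure] {σ : ℝ} (hσ0 : 0 < σ) (hσ2 : σ < 2) :
    Integrable (fun z : E ↦ (‖z‖ ^ (Module.finrank ℝ E + σ))⁻¹ * min 1 (‖z‖ ^ 2)) μ := by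
  refine (integrable_fun_norm_addHaar μ
    (f := fun r ↦ (r ^ (Module.finrank ℝ E + σ))⁻¹ * min 1 (r ^ 2))).2 ?_
  refine (integrableOn_Ioi_rpow_mul_min_one_sq hσ0 hσ2).congr_fun (fun r hr ↦ ?_)
    measurableSet_Ioi
  have hr : 0 < r := hr
  have hexp : r ^ (-1 - σ) = r ^ (Module.finrank ℝ E - 1) * (r ^ (Module.finrank ℝ E + σ))⁻¹ := by
    rw [← Real.rpow_natCast, ← Real.rpow_neg hr.le, ← Real.rpow_add hr,
      Nat.cast_pred Module.finrank_pos]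
    congr 1
    ring
  simp only [hexp, smul_eq_mul, mul_assoc]

end LevyKernel

section WeightedSecondDiff

variable {E F : Type*} [SeminormedAddCommGroup E] [NormedAddCommGroup F] [NormedSpace ℝ F]

lemma norm_inv_norm_rpow_smul (z : E) (p : ℝ) (v : F) :
    ‖(‖z‖ ^ p)⁻¹ • v‖ = (‖z‖ ^ p)⁻¹ * ‖v‖ := by
  rw [norm_smul, Real.norm_of_nonneg (by positivity)]

lemma inv_norm_rpow_le_of_norm_add_lt {p : ℝ} (hp : 0 ≤ p) {x z : E}
    (h : ‖x + z‖ < ‖x‖ / 2) : (‖z‖ ^ p)⁻¹ ≤ (2 / ‖x‖) ^ p := by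
  have hx : 0 < ‖x‖ / 2 := (norm_nonneg _).trans_lt h
  have hz : ‖x‖ / 2 ≤ ‖z‖ := by linarith [norm_le_add_norm_add x z]
  calc (‖z‖ ^ p)⁻¹ = (‖z‖⁻¹) ^ p := (Real.inv_rpow (norm_nonneg z) p).symm
    _ ≤ ((‖x‖ / 2)⁻¹) ^ p := by gcongr
    _ = (2 / ‖x‖) ^ p := by rw [inv_div]

lemma norm_inv_norm_rpow_smul_secondDiff_le {p : ℝ} (hp : 0 ≤ p) {g : E → F} {x : E}
    (hg : Function.support g ⊆ Metric.ball 0 (‖x‖ / 2)) (z : E) :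
    ‖(‖z‖ ^ p)⁻¹ • secondDiff g x z‖ ≤ (2 / ‖x‖) ^ p * (‖g (x + z)‖ + ‖g (x - z)‖) := by
  have hsupp (y : E) (hy : g y ≠ 0) : ‖y‖ < ‖x‖ / 2 := mem_ball_zero_iff.1 (hg hy)
  have hx : g x = 0 := by
    by_contra hx
    linarith [hsupp x hx, norm_nonneg x]
  have hterm (w : E) : (‖w‖ ^ p)⁻¹ * ‖g (x + w)‖ ≤ (2 / ‖x‖) ^ p * ‖g (x + w)‖ := by
    by_cases hw : g (x + w) = 0
    · simp only [hw, norm_zero, mul_zero, le_refl]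
    · gcongr
      exact inv_norm_rpow_le_of_norm_add_lt hp (hsupp _ hw)
  calc ‖(‖z‖ ^ p)⁻¹ • secondDiff g x z‖
      = (‖z‖ ^ p)⁻¹ * ‖-g (x + z) - g (x - z)‖ := by
        rw [norm_inv_norm_rpow_smul, secondDiff, hx, smul_zero, zero_sub]
    _ ≤ (‖z‖ ^ p)⁻¹ * (‖g (x + z)‖ + ‖g (x - z)‖) := by
        gcongr
        simpa only [norm_neg] using norm_sub_le (-g (x + z)) (g (x - z))
    _ = (‖z‖ ^ p)⁻¹ * ‖g (x + z)‖ + (‖-z‖ ^ p)⁻¹ * ‖g (x + -z)‖ := by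
        rw [mul_add, norm_neg, ← sub_eq_add_neg]
    _ ≤ (2 / ‖x‖) ^ p * ‖g (x + z)‖ + (2 / ‖x‖) ^ p * ‖g (x + -z)‖ :=
        add_le_add (hterm z) (hterm (-z))
    _ = (2 / ‖x‖) ^ p * (‖g (x + z)‖ + ‖g (x - z)‖) := by rw [← mul_add, ← sub_eq_add_neg]

end WeightedSecondDiff

section HypersingularIntegral

variable {E F : Type*} [SeminormedAddCommGroup E] [MeasurableSpace E] [NormedAddCommGroup F]
  [NormedSpace ℝ F]

/-- The integral of the second difference of `g` at `x` against the kernel `‖z‖ ^ (-p)`. For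
`p = N + σ` on `ℝ^N` it is the fractional Laplacian of order `σ / 2`, up to the normalization.
It has the junk value `0` where the integrand is not absolutely integrable. -/
noncomputable def hypersingularIntegral (μ : Measure E) (p : ℝ) (g : E → F) (x : E) : F :=
  ∫ z, (‖z‖ ^ p)⁻¹ • secondDiff g x z ∂μ

lemma norm_hypersingularIntegral_le_mul_integral {μ : Measure E} {p M : ℝ} {g : E → F} {x : E}
    (hμ : Integrable (fun z ↦ (‖z‖ ^ p)⁻¹ * min 1 (‖z‖ ^ 2)) μ)
    (hM : ∀ z, ‖secondDiff g x z‖ ≤ M * min 1 (‖z‖ ^ 2)) :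
    ‖hypersingularIntegral μ p g x‖ ≤ M * ∫ z, (‖z‖ ^ p)⁻¹ * min 1 (‖z‖ ^ 2) ∂μ := by
  rw [← integral_const_mul]
  refine norm_integral_le_of_norm_le (hμ.const_mul M) (.of_forall fun z ↦ ?_)
  calc ‖(‖z‖ ^ p)⁻¹ • secondDiff g x z‖
      = (‖z‖ ^ p)⁻¹ * ‖secondDiff g x z‖ := norm_inv_norm_rpow_smul z p _
    _ ≤ (‖z‖ ^ p)⁻¹ * (M * min 1 (‖z‖ ^ 2)) := by gcongr; exact hM z
    _ = M * ((‖z‖ ^ p)⁻¹ * min 1 (‖z‖ ^ 2)) := by ring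

lemma norm_hypersingularIntegral_le_of_support_subset [MeasurableAdd E] [MeasurableNeg E]
    {μ : Measure E} [μ.IsAddLeftInvariant] [μ.IsNegInvariant] {p : ℝ} (hp : 0 ≤ p) {g : E → F}
    (hint : Integrable g μ) {x : E} (hg : Function.support g ⊆ Metric.ball 0 (‖x‖ / 2)) :
    ‖hypersingularIntegral μ p g x‖ ≤ (2 / ‖x‖) ^ p * (2 * ∫ y, ‖g y‖ ∂μ) := by
  have hadd : Integrable (fun z ↦ ‖g (x + z)‖) μ := hint.norm.comp_add_left x
  have hsub : Integrable (fun z ↦ ‖g (x - z)‖) μ := hint.norm.comp_sub_left x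
  calc ‖hypersingularIntegral μ p g x‖
      ≤ ∫ z, (2 / ‖x‖) ^ p * (‖g (x + z)‖ + ‖g (x - z)‖) ∂μ :=
        norm_integral_le_of_norm_le ((hadd.add hsub).const_mul _)
          (.of_forall (norm_inv_norm_rpow_smul_secondDiff_le hp hg))
    _ = (2 / ‖x‖) ^ p * (2 * ∫ y, ‖g y‖ ∂μ) := by
        rw [integral_const_mul, integral_add hadd hsub,
          integral_add_left_eq_self (fun y ↦ ‖g y‖) x,
          integral_sub_left_eq_self (fun y ↦ ‖g y‖) μ x, two_mul]

end HypersingularIntegral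

lemma exists_norm_le_div_one_add_norm_rpow {E F : Type*} [SeminormedAddCommGroup E]
    [SeminormedAddCommGroup F] {f : E → F} {p A B r : ℝ} (hp : 0 ≤ p) (hA : ∀ x, ‖f x‖ ≤ A)
    (hB : ∀ x, r ≤ ‖x‖ → ‖f x‖ * ‖x‖ ^ p ≤ B) :
    ∃ C > 0, ∀ x, ‖f x‖ ≤ C / (1 + ‖x‖ ^ p) := by
  have hmul (x : E) : ‖f x‖ * ‖x‖ ^ p ≤ max (A * r ^ p) B := by
    rcases le_total r ‖x‖ with hx | hx
    · exact le_max_of_le_right (hB x hx)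
    · refine le_max_of_le_left ?_
      have hA0 : 0 ≤ A := (norm_nonneg _).trans (hA x)
      gcongr
      exact hA x
  refine ⟨max (A + max (A * r ^ p) B) 1, by positivity, fun x ↦ ?_⟩
  rw [le_div_iff₀ (by positivity), mul_add, mul_one]
  exact le_max_of_le_left (add_le_add (hA x) (hmul x))

theorem exists_norm_hypersingularIntegral_le_div_one_add_norm_rpow {E F : Type*}
    [NormedAddCommGroup E] [NormedSpace ℝ E] [FiniteDimensional ℝ E] [Nontrivial E]
    [MeasurableSpace E] [BorelSpace E] [NormedAddCommGroup F] [NormedSpace ℝ F] (μ : Measure E)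
    [μ.IsAddHaarMeasure] {σ : ℝ} (hσ0 : 0 < σ) (hσ2 : σ < 2) {g : E → F} (hint : Integrable g μ)
    (hsupp : HasCompactSupport g) {M : ℝ}
    (hM : ∀ x z, ‖secondDiff g x z‖ ≤ M * min 1 (‖z‖ ^ 2)) :
    ∃ C > 0, ∀ x, ‖hypersingularIntegral μ (Module.finrank ℝ E + σ) g x‖ ≤
      C / (1 + ‖x‖ ^ (Module.finrank ℝ E + σ)) := by
  obtain ⟨R, hR, hgR⟩ := hsupp.isCompact.isBounded.subset_ball_lt 0 0
  set p : ℝ := Module.finrank ℝ E + σ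
  have hp : 0 ≤ p := by positivity
  refine exists_norm_le_div_one_add_norm_rpow (r := 2 * R) (B := 2 ^ p * (2 * ∫ y, ‖g y‖ ∂μ)) hp
    (fun x ↦ norm_hypersingularIntegral_le_mul_integral
      (integrable_inv_norm_rpow_mul_min_one_sq μ hσ0 hσ2) (hM x)) fun x hx ↦ ?_
  have hx0 : 0 < ‖x‖ := by linarith
  have hball : Function.support g ⊆ Metric.ball 0 (‖x‖ / 2) :=
    (subset_tsupport g).trans (hgR.trans (Metric.ball_subset_ball (by linarith)))
  calc ‖hypersingularIntegral μ p g x‖ * ‖x‖ ^ p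
      ≤ (2 / ‖x‖) ^ p * (2 * ∫ y, ‖g y‖ ∂μ) * ‖x‖ ^ p := by
        gcongr
        exact norm_hypersingularIntegral_le_of_support_subset hp hint hball
    _ = 2 ^ p * (2 * ∫ y, ‖g y‖ ∂μ) := by
        rw [Real.div_rpow zero_le_two hx0.le]
        field_simp

lemma contDiff_comp_norm {E F : Type*} [NormedAddCommGroup E] [InnerProductSpace ℝ E]
    [NormedAddCommGroup F] [NormedSpace ℝ F] {η : ℝ → F} {n : WithTop ℕ∞} {c : F}
    (hη : ContDiff ℝ n η) (hconst : ∀ᶠ s in nhdsWithin 0 (Set.Ici 0), η s = c) :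
    ContDiff ℝ n (fun y : E ↦ η ‖y‖) := by
  refine contDiff_iff_contDiffAt.2 fun y ↦ ?_
  rcases eq_or_ne y 0 with rfl | hy
  · have hnorm : Tendsto (fun w : E ↦ ‖w‖) (nhds 0) (nhdsWithin 0 (Set.Ici 0)) :=
      tendsto_nhdsWithin_iff.2 ⟨tendsto_norm_zero, .of_forall norm_nonneg⟩
    exact contDiffAt_const.congr_of_eventuallyEq (hnorm.eventually hconst)
  · exact hη.contDiffAt.comp y (contDiffAt_norm ℝ hy)

lemma hasCompactSupport_comp_norm {E F : Type*} [NormedAddCommGroup E] [ProperSpace E] [Zero F]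
    {η : ℝ → F} {R : ℝ} (hη : ∀ s, R ≤ s → η s = 0) : HasCompactSupport (fun y : E ↦ η ‖y‖) :=
  .intro (isCompact_closedBall 0 R) fun _ hy ↦
    hη _ (not_le.1 (mt mem_closedBall_zero_iff.2 hy)).le

lemma fracC_pos (N : ℕ) {σ : ℝ} (hσ0 : 0 < σ) (hσ2 : σ < 2) : 0 < fracC N σ := by
  have hden : 0 < Real.Gamma (1 - σ / 2) := Real.Gamma_pos_of_pos (by linarith)
  unfold fracC
  positivity

lemma fracLap_eq_mul_hypersingularIntegral (N : ℕ) (σ : ℝ) (g : EuclideanSpace ℝ (Fin N) → ℝ)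
    (x : EuclideanSpace ℝ (Fin N)) :
    fracLap N σ g x = fracC N σ / 2 * hypersingularIntegral volume (N + σ) g x := by
  simp only [fracLap, hypersingularIntegral, secondDiff, smul_eq_mul, div_eq_inv_mul]

theorem fracLap_cutoff_decay_general (N : ℕ) (hN : 1 ≤ N) (σ : ℝ) (hσ0 : 0 < σ) (hσ2 : σ < 2)
    {g : EuclideanSpace ℝ (Fin N) → ℝ} (hg : ContDiff ℝ 2 g) (hsupp : HasCompactSupport g) :
    ∃ C > 0, ∀ x, |fracLap N σ g x| ≤ C / (1 + ‖x‖ ^ ((N : ℝ) + σ)) := by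
  have : NeZero N := ⟨Nat.one_le_iff_ne_zero.1 hN⟩
  obtain ⟨K, hK⟩ := (hg.fderiv_right (m := 1) le_rfl).lipschitzWith_of_hasCompactSupport
    (hsupp.fderiv ℝ) one_ne_zero
  obtain ⟨B, hB⟩ := hsupp.exists_bound_of_continuous hg.continuous
  obtain ⟨C, hC, hbound⟩ := exists_norm_hypersingularIntegral_le_div_one_add_norm_rpow volume
    hσ0 hσ2 (hg.continuous.integrable_of_hasCompactSupport hsupp) hsupp
    (norm_secondDiff_le_max_mul_min (hg.differentiable two_ne_zero) hK hB)
  rw [finrank_euclideanSpace_fin] at hbound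
  have hc : 0 < fracC N σ / 2 := half_pos (fracC_pos N hσ0 hσ2)
  refine ⟨fracC N σ / 2 * C, mul_pos hc hC, fun x ↦ ?_⟩
  rw [fracLap_eq_mul_hypersingularIntegral, abs_mul, abs_of_pos hc, mul_div_assoc]
  exact mul_le_mul_of_nonneg_left (hbound x) hc.le

/-- Decay estimate: `|(−Δ)^{σ/2} φ_1(x)| ≤ C̄ / (1 + |x|^{N+σ})` for all `x`. -/
theorem fracLap_cutoff_decay
    (N : ℕ) (hN : 1 ≤ N) (σ : ℝ) (hσ0 : 0 < σ) (hσ2 : σ < 2)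
    (η : ℝ → ℝ) (hη_smooth : ContDiff ℝ (⊤ : ℕ∞) η)
    (hη_range : ∀ s : ℝ, 0 ≤ s → η s ∈ Set.Icc (0 : ℝ) 1)
    (hη_mono : AntitoneOn η (Set.Ici 0))
    (hη_one : ∀ s : ℝ, 0 ≤ s → s ≤ 1 → η s = 1)
    (hη_zero : ∀ s : ℝ, 2 ≤ s → η s = 0) :
    ∃ C > 0, ∀ x : EuclideanSpace ℝ (Fin N),
      |fracLap N σ (fun y => η ‖y‖) x| ≤ C / (1 + ‖x‖ ^ ((N : ℝ) + σ)) := by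
  refine fracLap_cutoff_decay_general N hN σ hσ0 hσ2
    (contDiff_comp_norm (contDiff_infty.1 hη_smooth 2) (c := 1) ?_)
    (hasCompactSupport_comp_norm hη_zero)
  filter_upwards [Icc_mem_nhdsGE one_pos] with s hs using hη_one s hs.1 hs.2
end

section
/- Let r satisfy max{N/α, 2/σ} < r < N/σ. Then there exists a constant C > 0 such that ∫_{ℝ^N} ρ(y) |x−y|^{σ−N} dy ≤ C |x|^{σ−N/r} for almost every x ∈ ℝ^N. -/
open MeasureTheory Real Filter

/-!
Boundedness near the origin and decay at infinity combine to `‖ρ y‖ ≤ K‖y‖^(-β)` with `β = N/r`,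
where `σ < β < N`, so it suffices to bound the Riesz potential of `‖y‖^(-β)`. That potential is
homogeneous of degree `σ - β`, which reduces the matter to a unit vector `e`. There
`1 ≤ ‖y‖ + ‖e - y‖`, so the larger of the two norms is at least a third of `1 +` the smaller one;
hence the integrand is dominated by functions `‖z‖^(-p) (1 + ‖z‖)^(-q)` of `z = y` or `z = e - y`
with `{p, q} = {β, N - σ}`, which are integrable because `p < N < p + q`.
-/

section RieszComposition

open Module Metric

theorem rpow_neg_mul_rpow_neg_le_of_le {a b q : ℝ} (p : ℝ) (ha : 0 ≤ a) (hab : a ≤ b)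
    (h : 1 ≤ a + b) (hq : 0 ≤ q) :
    a ^ (-p) * b ^ (-q) ≤ 3 ^ q * (a ^ (-p) * (1 + a) ^ (-q)) := by
  have hb : b ^ (-q) ≤ 3 ^ q * (1 + a) ^ (-q) :=
    calc b ^ (-q) ≤ (3⁻¹ * (1 + a)) ^ (-q) :=
          rpow_le_rpow_of_nonpos (by positivity) (by linarith) (neg_nonpos.2 hq)
      _ = 3 ^ q * (1 + a) ^ (-q) := by
          rw [mul_rpow (by norm_num) (by positivity), inv_rpow (by norm_num),
            rpow_neg (by norm_num), inv_inv]
  calc a ^ (-p) * b ^ (-q) ≤ a ^ (-p) * (3 ^ q * (1 + a) ^ (-q)) := by gcongr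
    _ = 3 ^ q * (a ^ (-p) * (1 + a) ^ (-q)) := mul_left_comm ..

theorem rpow_neg_mul_rpow_neg_le_add {a b p q : ℝ} (ha : 0 ≤ a) (hb : 0 ≤ b) (h : 1 ≤ a + b)
    (hp : 0 ≤ p) (hq : 0 ≤ q) :
    a ^ (-p) * b ^ (-q) ≤
      3 ^ q * (a ^ (-p) * (1 + a) ^ (-q)) + 3 ^ p * (b ^ (-q) * (1 + b) ^ (-p)) := by
  rcases le_total a b with hab | hba
  · exact le_add_of_le_of_nonneg (rpow_neg_mul_rpow_neg_le_of_le p ha hab h hq) (by positivity)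
  · rw [mul_comm (a ^ (-p))]
    exact le_add_of_nonneg_of_le (by positivity)
      (rpow_neg_mul_rpow_neg_le_of_le q hb hba (by linarith) hp)

variable {E : Type*} [NormedAddCommGroup E]

theorem exists_norm_le_mul_norm_rpow_of_decay {F : Type*} [SeminormedAddGroup F] {ρ : E → F}
    {C R α β : ℝ} (hR : 0 < R) (hβ : 0 ≤ β) (hβα : β ≤ α)
    (hbdd : Bornology.IsBounded (ρ '' closedBall 0 R))
    (hdecay : ∀ x, R ≤ ‖x‖ → ‖ρ x‖ ≤ C * ‖x‖ ^ (-α)) :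
    ∃ K > 0, ∀ x ≠ 0, ‖ρ x‖ ≤ K * ‖x‖ ^ (-β) := by
  obtain ⟨M, hM, hρM⟩ := hbdd.exists_pos_norm_le
  refine ⟨max (M * R ^ β) (|C| * R ^ (β - α)), by positivity, fun x hx => ?_⟩
  have hx₀ : 0 < ‖x‖ := norm_pos_iff.2 hx
  rcases le_total ‖x‖ R with hxR | hRx
  · have hone : 1 ≤ R ^ β * ‖x‖ ^ (-β) := by
      rw [rpow_neg hx₀.le, ← div_eq_mul_inv, one_le_div (by positivity)]
      gcongr
    calc ‖ρ x‖ ≤ M := hρM _ (Set.mem_image_of_mem ρ (mem_closedBall_zero_iff.2 hxR))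
      _ ≤ M * (R ^ β * ‖x‖ ^ (-β)) := le_mul_of_one_le_right hM.le hone
      _ = M * R ^ β * ‖x‖ ^ (-β) := (mul_assoc ..).symm
      _ ≤ _ := by gcongr; exact le_max_left ..
  · calc ‖ρ x‖ ≤ C * ‖x‖ ^ (-α) := hdecay x hRx
      _ ≤ |C| * ‖x‖ ^ (-α) := by gcongr; exact le_abs_self C
      _ = |C| * ‖x‖ ^ (β - α) * ‖x‖ ^ (-β) := by
          rw [mul_assoc, ← rpow_add hx₀, show β - α + -β = -α by ring]
      _ ≤ |C| * R ^ (β - α) * ‖x‖ ^ (-β) := by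
          gcongr ?_ * ?_ * _
          exact rpow_le_rpow_of_nonpos hR hRx (sub_nonpos.2 hβα)
      _ ≤ _ := by gcongr; exact le_max_right ..

variable [NormedSpace ℝ E] [FiniteDimensional ℝ E] [MeasurableSpace E] [BorelSpace E]
  (μ : Measure E) [μ.IsAddHaarMeasure]

theorem integrable_norm_rpow_neg_mul_one_add_norm_rpow_neg {p q : ℝ} (hp : 0 ≤ p)
    (hpE : p < finrank ℝ E) (hpq : finrank ℝ E < p + q) :
    Integrable (fun z : E => ‖z‖ ^ (-p) * (1 + ‖z‖) ^ (-q)) μ := by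
  have hdim : 1 ≤ finrank ℝ E := by exact_mod_cast hp.trans_lt hpE
  have hmeas : AEStronglyMeasurable (fun z : E => ‖z‖ ^ (-p) * (1 + ‖z‖) ^ (-q)) μ :=
    Measurable.aestronglyMeasurable (by fun_prop)
  have near : IntegrableOn (fun z : E => ‖z‖ ^ (-p) * (1 + ‖z‖) ^ (-q)) (ball 0 1) μ := by
    refine integrableOn_ball_of_norm_le_rpow (C := 1) hdim hpE (.of_forall fun z => ?_) hmeas
    rw [norm_of_nonneg (by positivity), one_mul]
    exact mul_le_of_le_one_right (by positivity)
      (rpow_le_one_of_one_le_of_nonpos (by simp) (by linarith))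
  have far : IntegrableOn (fun z : E => ‖z‖ ^ (-p) * (1 + ‖z‖) ^ (-q)) (ball 0 1)ᶜ μ := by
    refine ((integrable_one_add_norm hpq).const_mul (2 ^ p)).integrableOn.mono'
      hmeas.restrict (ae_restrict_of_forall_mem measurableSet_ball.compl fun z hz => ?_)
    have hz : 1 ≤ ‖z‖ := by simpa using hz
    rw [norm_of_nonneg (by positivity)]
    calc ‖z‖ ^ (-p) * (1 + ‖z‖) ^ (-q) ≤ (2⁻¹ * (1 + ‖z‖)) ^ (-p) * (1 + ‖z‖) ^ (-q) := by
          gcongr ?_ * _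
          exact rpow_le_rpow_of_nonpos (by positivity) (by linarith) (neg_nonpos.2 hp)
      _ = 2 ^ p * (1 + ‖z‖) ^ (-(p + q)) := by
          rw [mul_rpow (by norm_num) (by positivity), inv_rpow (by norm_num),
            rpow_neg (by norm_num), inv_inv, neg_add, rpow_add (by positivity), mul_assoc]
  exact integrableOn_univ.1 (Set.union_compl_self (ball (0 : E) 1) ▸ near.union far)

theorem exists_lintegral_norm_rpow_neg_mul_norm_sub_rpow_neg_le_of_one_le_norm {p q : ℝ}
    (hp : p < finrank ℝ E) (hq : q < finrank ℝ E) (hpq : finrank ℝ E < p + q) :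
    ∃ C : ℝ, ∀ e : E, 1 ≤ ‖e‖ →
      ∫⁻ y, ENNReal.ofReal (‖y‖ ^ (-p) * ‖e - y‖ ^ (-q)) ∂μ ≤ ENNReal.ofReal C := by
  have hp₀ : 0 ≤ p := by linarith
  have hq₀ : 0 ≤ q := by linarith
  let f (z : E) : ℝ := 3 ^ q * (‖z‖ ^ (-p) * (1 + ‖z‖) ^ (-q))
  let g (z : E) : ℝ := 3 ^ p * (‖z‖ ^ (-q) * (1 + ‖z‖) ^ (-p))
  have hf : Integrable f μ :=
    (integrable_norm_rpow_neg_mul_one_add_norm_rpow_neg μ hp₀ hp hpq).const_mul _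
  have hg : Integrable g μ :=
    (integrable_norm_rpow_neg_mul_one_add_norm_rpow_neg μ hq₀ hq (by linarith)).const_mul _
  refine ⟨∫ z, f z ∂μ + ∫ z, g z ∂μ, fun e he => ?_⟩
  have hge : Integrable (fun y => g (e - y)) μ := hg.comp_sub_left e
  calc ∫⁻ y, ENNReal.ofReal (‖y‖ ^ (-p) * ‖e - y‖ ^ (-q)) ∂μ
      ≤ ∫⁻ y, ENNReal.ofReal (f y + g (e - y)) ∂μ := by
        gcongr with y
        have htri : 1 ≤ ‖y‖ + ‖e - y‖ := he.trans (by simpa using norm_add_le y (e - y))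
        exact rpow_neg_mul_rpow_neg_le_add (norm_nonneg y) (norm_nonneg _) htri hp₀ hq₀
    _ = ENNReal.ofReal (∫ y, (f y + g (e - y)) ∂μ) :=
        (ofReal_integral_eq_lintegral_ofReal (hf.add hge)
          (.of_forall fun y => by dsimp only [f, g, Pi.zero_apply, Pi.add_apply]; positivity)).symm
    _ = ENNReal.ofReal (∫ z, f z ∂μ + ∫ z, g z ∂μ) := by
        rw [integral_add hf hge, integral_sub_left_eq_self]

theorem lintegral_comp_inv_smul_of_pos (f : E → ENNReal) {t : ℝ} (ht : 0 < t) :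
    ∫⁻ y, f (t⁻¹ • y) ∂μ = ENNReal.ofReal (t ^ finrank ℝ E) * ∫⁻ z, f z ∂μ := by
  have ht' : t⁻¹ ≠ 0 := inv_ne_zero ht.ne'
  rw [← (measurableEmbedding_const_smul₀ ht').lintegral_map, Measure.map_addHaar_smul μ ht',
    lintegral_smul_measure, inv_pow, inv_inv, abs_of_nonneg (by positivity), smul_eq_mul]

theorem lintegral_norm_rpow_neg_mul_norm_smul_sub_rpow_neg (p q : ℝ) {t : ℝ} (ht : 0 < t) (e : E) :
    ∫⁻ y, ENNReal.ofReal (‖y‖ ^ (-p) * ‖t • e - y‖ ^ (-q)) ∂μ =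
      ENNReal.ofReal (t ^ (finrank ℝ E - p - q)) *
        ∫⁻ z, ENNReal.ofReal (‖z‖ ^ (-p) * ‖e - z‖ ^ (-q)) ∂μ := by
  have hscale (y : E) : ‖y‖ ^ (-p) * ‖t • e - y‖ ^ (-q) =
      t ^ (-p - q) * (‖t⁻¹ • y‖ ^ (-p) * ‖e - t⁻¹ • y‖ ^ (-q)) := by
    obtain ⟨z, rfl⟩ : ∃ z, y = t • z := ⟨t⁻¹ • y, (smul_inv_smul₀ ht.ne' y).symm⟩
    rw [inv_smul_smul₀ ht.ne', ← smul_sub, norm_smul_of_nonneg ht.le, norm_smul_of_nonneg ht.le,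
      mul_rpow ht.le (norm_nonneg _), mul_rpow ht.le (norm_nonneg _), sub_eq_add_neg (-p),
      rpow_add ht]
    ring
  simp_rw [hscale, ENNReal.ofReal_mul (rpow_nonneg ht.le _)]
  rw [lintegral_const_mul' _ _ ENNReal.ofReal_ne_top, lintegral_comp_inv_smul_of_pos μ
    (fun z => ENNReal.ofReal (‖z‖ ^ (-p) * ‖e - z‖ ^ (-q))) ht, ← mul_assoc,
    ← ENNReal.ofReal_mul (by positivity), ← rpow_natCast, ← rpow_add ht]
  congr 3
  ring

theorem exists_lintegral_norm_rpow_neg_mul_norm_sub_rpow_neg_le {p q : ℝ}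
    (hp : p < finrank ℝ E) (hq : q < finrank ℝ E) (hpq : finrank ℝ E < p + q) :
    ∃ C > 0, ∀ x : E, x ≠ 0 → ∫⁻ y, ENNReal.ofReal (‖y‖ ^ (-p) * ‖x - y‖ ^ (-q)) ∂μ ≤
      ENNReal.ofReal (C * ‖x‖ ^ (finrank ℝ E - p - q)) := by
  obtain ⟨C, hC⟩ :=
    exists_lintegral_norm_rpow_neg_mul_norm_sub_rpow_neg_le_of_one_le_norm μ hp hq hpq
  refine ⟨max C 1, by positivity, fun x hx => ?_⟩
  obtain ⟨e, he, hxe⟩ : ∃ e : E, ‖e‖ = 1 ∧ ‖x‖ • e = x :=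
    ⟨‖x‖⁻¹ • x, norm_smul_inv_norm (𝕜 := ℝ) hx, smul_inv_smul₀ (norm_ne_zero_iff.2 hx) x⟩
  calc ∫⁻ y, ENNReal.ofReal (‖y‖ ^ (-p) * ‖x - y‖ ^ (-q)) ∂μ
      = ENNReal.ofReal (‖x‖ ^ (finrank ℝ E - p - q)) *
          ∫⁻ z, ENNReal.ofReal (‖z‖ ^ (-p) * ‖e - z‖ ^ (-q)) ∂μ := by
        rw [← lintegral_norm_rpow_neg_mul_norm_smul_sub_rpow_neg μ p q (norm_pos_iff.2 hx), hxe]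
    _ ≤ ENNReal.ofReal (‖x‖ ^ (finrank ℝ E - p - q)) * ENNReal.ofReal (max C 1) := by
        gcongr
        exact (hC e he.ge).trans (ENNReal.ofReal_le_ofReal (le_max_left C 1))
    _ = ENNReal.ofReal (max C 1 * ‖x‖ ^ (finrank ℝ E - p - q)) := by
        rw [← ENNReal.ofReal_mul (by positivity), mul_comm]

theorem exists_lintegral_norm_mul_norm_sub_rpow_le {F : Type*} [SeminormedAddGroup F] {ρ : E → F}
    {K β σ : ℝ} (hσ : 0 < σ) (hσβ : σ < β) (hβ : β < finrank ℝ E) (hK : 0 < K)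
    (hρ : ∀ y ≠ 0, ‖ρ y‖ ≤ K * ‖y‖ ^ (-β)) :
    ∃ C > 0, ∀ x : E, x ≠ 0 → ∫⁻ y, ENNReal.ofReal (‖ρ y‖ * ‖x - y‖ ^ (σ - finrank ℝ E)) ∂μ ≤
      ENNReal.ofReal (C * ‖x‖ ^ (σ - β)) := by
  obtain ⟨C, hC, hpot⟩ := exists_lintegral_norm_rpow_neg_mul_norm_sub_rpow_neg_le μ
    (q := finrank ℝ E - σ) hβ (by linarith) (by linarith)
  have hdim : 0 < finrank ℝ E := by exact_mod_cast (hσ.trans hσβ).trans hβ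
  have : Nontrivial E := nontrivial_of_finrank_pos hdim
  refine ⟨K * C, by positivity, fun x hx => ?_⟩
  calc ∫⁻ y, ENNReal.ofReal (‖ρ y‖ * ‖x - y‖ ^ (σ - finrank ℝ E)) ∂μ
      ≤ ∫⁻ y, ENNReal.ofReal K *
          ENNReal.ofReal (‖y‖ ^ (-β) * ‖x - y‖ ^ (-(finrank ℝ E - σ))) ∂μ := by
        refine lintegral_mono_ae ((μ.ae_ne 0).mono fun y hy => ?_)
        rw [← ENNReal.ofReal_mul hK.le, neg_sub, ← mul_assoc]
        gcongr
        exact hρ y hy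
    _ = ENNReal.ofReal K *
          ∫⁻ y, ENNReal.ofReal (‖y‖ ^ (-β) * ‖x - y‖ ^ (-(finrank ℝ E - σ))) ∂μ :=
        lintegral_const_mul' _ _ ENNReal.ofReal_ne_top
    _ ≤ ENNReal.ofReal K *
          ENNReal.ofReal (C * ‖x‖ ^ (finrank ℝ E - β - (finrank ℝ E - σ))) := by
        gcongr
        exact hpot x hx
    _ = ENNReal.ofReal (K * C * ‖x‖ ^ (σ - β)) := by
        rw [← ENNReal.ofReal_mul hK.le, mul_assoc, sub_sub_sub_comm, sub_self, zero_sub, neg_sub]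

theorem riesz_potential_decay_dim_ge_three_general {F : Type*} [SeminormedAddGroup F] {ρ : E → F}
    {σ α C R r : ℝ} (hσ : 0 < σ) (hα : 0 < α) (hR : 0 < R)
    (hbdd : Bornology.IsBounded (ρ '' closedBall 0 R))
    (hdecay : ∀ x, R ≤ ‖x‖ → ‖ρ x‖ ≤ C * ‖x‖ ^ (-α))
    (hαr : finrank ℝ E / α < r) (hr : 1 < r) (hrσ : r < finrank ℝ E / σ) :
    ∃ C > 0, ∀ x : E, x ≠ 0 → ∫⁻ y, ENNReal.ofReal (‖ρ y‖ * ‖x - y‖ ^ (σ - finrank ℝ E)) ∂μ ≤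
      ENNReal.ofReal (C * ‖x‖ ^ (σ - finrank ℝ E / r)) := by
  have hr₀ : 0 < r := one_pos.trans hr
  have hσβ : σ < finrank ℝ E / r := (lt_div_comm₀ hr₀ hσ).1 hrσ
  have hβα : finrank ℝ E / r < α := (div_lt_comm₀ hα hr₀).1 hαr
  have hβ₀ : 0 < finrank ℝ E / r := hσ.trans hσβ
  have hβE : finrank ℝ E / r < finrank ℝ E :=
    div_lt_self ((div_pos_iff_of_pos_right hr₀).1 hβ₀) hr
  obtain ⟨K, hK, hρ⟩ := exists_norm_le_mul_norm_rpow_of_decay hR hβ₀.le hβα.le hbdd hdecay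
  exact exists_lintegral_norm_mul_norm_sub_rpow_le μ hσ hσβ hβE hK hρ

end RieszComposition

/-- Decay of the Riesz potential of a fast-decaying density in dimension `N ≥ 3`:
`∫_{ℝ^N} ρ(y)|x−y|^{σ−N} dy ≤ C |x|^{σ−N/r}` for a.e. `x ∈ ℝ^N`. -/
theorem riesz_potential_decay_dim_ge_three
    (N : ℕ) (hN : 3 ≤ N) (σ : ℝ) (hσ0 : 0 < σ) (hσ2 : σ < 2)
    (ρ : EuclideanSpace ℝ (Fin N) → ℝ) (hρc : Continuous ρ)
    (hρpos : ∀ x, 0 < ρ x)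
    (Ccheck Rcheck α : ℝ) (hC : 0 < Ccheck) (hR : 0 < Rcheck) (hα : σ < α)
    (hdecay : ∀ x : EuclideanSpace ℝ (Fin N), Rcheck ≤ ‖x‖ →
      ρ x ≤ Ccheck * ‖x‖ ^ (-α))
    (r : ℝ) (hr1 : (N : ℝ) / α < r) (hr2 : 2 / σ < r) (hr3 : r < (N : ℝ) / σ) :
    ∃ C > 0, ∀ᵐ x : EuclideanSpace ℝ (Fin N),
      (∫⁻ y : EuclideanSpace ℝ (Fin N),
          ENNReal.ofReal (ρ y * ‖x - y‖ ^ (σ - (N : ℝ))))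
        ≤ ENNReal.ofReal (C * ‖x‖ ^ (σ - (N : ℝ) / r)) := by
  have : NeZero N := ⟨by omega⟩
  obtain ⟨C, hC₀, hpot⟩ := riesz_potential_decay_dim_ge_three_general (R := Rcheck) volume hσ0
    (hσ0.trans hα) hR ((isCompact_closedBall 0 Rcheck).image hρc).isBounded
    (by simpa only [norm_of_nonneg (hρpos _).le] using hdecay) (by simpa using hr1)
    (((one_lt_div hσ0).2 hσ2).trans hr2) (by simpa using hr3)
  simp only [norm_of_nonneg (hρpos _).le, finrank_euclideanSpace_fin] at hpot
  exact ⟨C, hC₀, (volume.ae_ne 0).mono hpot⟩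
end
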